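/- arXiv:2209.13440 — 3 statements merged into one kernel-verified Lean document; each statement's English description precedes it below -/
import Mathlib

section
/- Let n ≥ 1 and let Φ₁, Φ₂ : ℂⁿ → ℝ be real-quadratic weights whose Levi matrices are positive definite. Then there exists a constant C > 0 such that ‖f‖_{H_{Φ₂}} ≤ C·‖f‖_{H_{Φ₁}} for every entire function f on ℂⁿ (in particular H_{Φ₁} ⊆ H_{Φ₂}) if and only if Φ₁(x) ≤ Φ₂(x) for all x ∈ ℂⁿ. -/
open MeasureTheory Real Matrix
open scoped ENNReal ComplexOrder

noncomputable section

/-- Bilinear dot product on ℂⁿ. -/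
def dotC {n : ℕ} (x y : Fin n → ℂ) : ℂ := ∑ j, x j * y j

/-- The real-quadratic weight Φ(x) = (1/2)(L x·x̄ + Re(P x·x)). -/
def weight {n : ℕ} (L P : Matrix (Fin n) (Fin n) ℂ) (x : Fin n → ℂ) : ℝ :=
  (1 / 2) * ((dotC (L.mulVec x) (star x)).re + (dotC (P.mulVec x) x).re)

/-- Squared H_Φ norm, valued in [0,∞]. -/
def HPhiNormSq {n : ℕ} (Φ : (Fin n → ℂ) → ℝ) (f : (Fin n → ℂ) → ℂ) : ℝ≥0∞ :=
  ∫⁻ x, ENNReal.ofReal (‖f x‖ ^ 2 * Real.exp (-4 * π * Φ x))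

/-- H_Φ norm, valued in [0,∞]. -/
def HPhiNorm {n : ℕ} (Φ : (Fin n → ℂ) → ℝ) (f : (Fin n → ℂ) → ℂ) : ℝ≥0∞ :=
  HPhiNormSq Φ f ^ (1 / 2 : ℝ)

/-- Entrywise complex conjugate of a matrix. -/
def conjM {m : Type*} (M : Matrix m m ℂ) : Matrix m m ℂ := M.map (starRingEnd ℂ)

/-- The matrix 𝐀_Φ associated with the weight with Levi matrix L and pluriharmonic part P. -/
def Amat {n : ℕ} (L P : Matrix (Fin n) (Fin n) ℂ) :
    Matrix (Fin n ⊕ Fin n) (Fin n ⊕ Fin n) ℂ :=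
  Matrix.fromBlocks (-(conjM L⁻¹ * P)) (Complex.I • conjM L⁻¹)
    (Complex.I • (L - conjM (P * L⁻¹) * P)) (-(conjM (P * L⁻¹)))

/-- Norm of the embedding H_{Φ₁} → H_{Φ₂}. -/
def embedNorm {n : ℕ} (Φ₁ Φ₂ : (Fin n → ℂ) → ℝ) : ℝ≥0∞ :=
  ⨆ f : {f : (Fin n → ℂ) → ℂ //
      Differentiable ℂ f ∧ 0 < HPhiNorm Φ₁ f ∧ HPhiNorm Φ₁ f ≠ ⊤},
    HPhiNorm Φ₂ f.1 / HPhiNorm Φ₁ f.1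

/-- The complex symplectic form on ℂ^{2n}. -/
def symp {n : ℕ} (X Y : Fin n ⊕ Fin n → ℂ) : ℂ :=
  ∑ j, X (Sum.inr j) * Y (Sum.inl j) - ∑ j, Y (Sum.inr j) * X (Sum.inl j)

/-- The phase-space shift S_Y. -/
def shiftOp {n : ℕ} (Y : (Fin n → ℂ) × (Fin n → ℂ)) (f : (Fin n → ℂ) → ℂ)
    (x : Fin n → ℂ) : ℂ :=
  Complex.exp (2 * (π : ℂ) * Complex.I * (-(1 / 2) * dotC Y.1 Y.2 + dotC Y.2 x)) * f (x - Y.1)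


/-- The real Levi form `Re (L x · x̄)`. -/
def leviForm {n : ℕ} (L : Matrix (Fin n) (Fin n) ℂ) (x : Fin n → ℂ) : ℝ :=
  (dotC (L.mulVec x) (star x)).re

/-- The (unnormalised) coherent state centred at `w` for the weight given by `L` and `P`. -/
def coherentState {n : ℕ} (L P : Matrix (Fin n) (Fin n) ℂ) (w x : Fin n → ℂ) : ℂ :=
  Complex.exp (2 * π * dotC (L.mulVec x) (star w) + π * dotC (P.mulVec x) x)

lemma dotC_eq_dotProduct {n : ℕ} (x y : Fin n → ℂ) : dotC x y = x ⬝ᵥ y := rfl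

lemma weight_eq {n : ℕ} (L P : Matrix (Fin n) (Fin n) ℂ) (x : Fin n → ℂ) :
    weight L P x = (1 / 2) * (leviForm L x + (dotC (P.mulVec x) x).re) := rfl

lemma leviForm_sub {n : ℕ} {L : Matrix (Fin n) (Fin n) ℂ} (hL : L.IsHermitian)
    (x w : Fin n → ℂ) :
    leviForm L (x - w) =
      leviForm L x + leviForm L w - 2 * (dotC (L.mulVec x) (star w)).re := by
  have h : (dotC (L.mulVec w) (star x)).re = (dotC (L.mulVec x) (star w)).re := by
    have : dotC (L.mulVec w) (star x) = star (dotC (L.mulVec x) (star w)) := by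
      simp only [dotC_eq_dotProduct]
      rw [dotProduct_comm (L *ᵥ x), ← Matrix.star_dotProduct, Matrix.star_mulVec, hL.eq,
        ← Matrix.dotProduct_mulVec, dotProduct_comm]
    rw [this]; simp
  simp only [leviForm, dotC_eq_dotProduct, Matrix.mulVec_sub, star_sub, sub_dotProduct,
    dotProduct_sub, Complex.sub_re] at h ⊢
  linarith

lemma leviForm_smul {n : ℕ} (L : Matrix (Fin n) (Fin n) ℂ) (t : ℝ) (x : Fin n → ℂ) :
    leviForm L ((t : ℂ) • x) = t ^ 2 * leviForm L x := by
  simp [leviForm, dotC_eq_dotProduct, Matrix.mulVec_smul]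
  ring

lemma weight_smul {n : ℕ} (L P : Matrix (Fin n) (Fin n) ℂ) (t : ℝ) (x : Fin n → ℂ) :
    weight L P ((t : ℂ) • x) = t ^ 2 * weight L P x := by
  rw [weight_eq, weight_eq, leviForm_smul]
  simp [dotC_eq_dotProduct, Matrix.mulVec_smul]
  ring

lemma weight_parallelogram {n : ℕ} (L P : Matrix (Fin n) (Fin n) ℂ) (w y : Fin n → ℂ) :
    weight L P (w + y) + weight L P (w - y) = 2 * weight L P w + 2 * weight L P y := by
  simp only [weight, dotC_eq_dotProduct, Matrix.mulVec_sub, Matrix.mulVec_add, star_sub, star_add,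
    sub_dotProduct, dotProduct_sub, add_dotProduct, dotProduct_add, Complex.sub_re, Complex.add_re]
  ring

lemma leviForm_neg {n : ℕ} (L : Matrix (Fin n) (Fin n) ℂ) (x : Fin n → ℂ) :
    leviForm L (-x) = leviForm L x := by
  simp [leviForm, dotC_eq_dotProduct, Matrix.mulVec_neg]

lemma continuous_leviForm {n : ℕ} (L : Matrix (Fin n) (Fin n) ℂ) : Continuous (leviForm L) := by
  unfold leviForm dotC Matrix.mulVec dotProduct
  simp only [Pi.star_apply]
  fun_prop

lemma continuous_weight {n : ℕ} (L P : Matrix (Fin n) (Fin n) ℂ) : Continuous (weight L P) := by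
  have h := continuous_leviForm L
  have h' : Continuous fun x : Fin n → ℂ => (dotC (P.mulVec x) x).re := by
    unfold dotC Matrix.mulVec dotProduct
    fun_prop
  simp only [funext (weight_eq L P)]
  fun_prop

lemma differentiable_coherentState {n : ℕ} (L P : Matrix (Fin n) (Fin n) ℂ) (w : Fin n → ℂ) :
    Differentiable ℂ (coherentState L P w) := by
  unfold coherentState dotC Matrix.mulVec dotProduct
  fun_prop

lemma norm_sq_coherentState {n : ℕ} {L : Matrix (Fin n) (Fin n) ℂ} (hL : L.IsHermitian)
    (P : Matrix (Fin n) (Fin n) ℂ) (w x : Fin n → ℂ) :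
    ‖coherentState L P w x‖ ^ 2 =
      Real.exp (4 * π * weight L P x + 2 * π * leviForm L w - 2 * π * leviForm L (x - w)) := by
  rw [coherentState, Complex.norm_exp, ← Real.exp_nat_mul, leviForm_sub hL, weight_eq]
  congr 1
  have h2 : (2 : ℂ) * π = ((2 * π : ℝ) : ℂ) := by push_cast; rfl
  rw [h2, Complex.add_re, Complex.re_ofReal_mul, Complex.re_ofReal_mul]
  push_cast
  ring

lemma exists_pos_mul_sum_le_leviForm {n : ℕ} {L : Matrix (Fin n) (Fin n) ℂ} (hn : 1 ≤ n)
    (hL : L.PosDef) : ∃ m : ℝ, 0 < m ∧ ∀ x, m * ∑ j, ‖x j‖ ^ 2 ≤ leviForm L x := by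
  have : Nonempty (Fin n) := ⟨⟨0, hn⟩⟩
  have hpos : ∀ x : Fin n → ℂ, x ≠ 0 → 0 < leviForm L x := by
    intro x hx
    have h := (Complex.pos_iff.1 (hL.dotProduct_mulVec_pos hx)).1
    rwa [dotProduct_comm] at h
  obtain ⟨u, hu, hmin⟩ := (isCompact_sphere (0 : Fin n → ℂ) 1).exists_isMinOn
    (NormedSpace.sphere_nonempty.2 zero_le_one) (continuous_leviForm L).continuousOn
  have hu0 : u ≠ 0 := by
    rintro rfl
    simp at hu
  have hn' : (0 : ℝ) < n := by exact_mod_cast hn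
  refine ⟨leviForm L u / n, div_pos (hpos u hu0) hn', fun x => ?_⟩
  have hsum : ∑ j, ‖x j‖ ^ 2 ≤ n * ‖x‖ ^ 2 := by
    calc ∑ j, ‖x j‖ ^ 2 ≤ ∑ _j : Fin n, ‖x‖ ^ 2 :=
          Finset.sum_le_sum fun j _ => by gcongr; exact norm_le_pi_norm x j
      _ = n * ‖x‖ ^ 2 := by simp
  have hx : leviForm L u * ‖x‖ ^ 2 ≤ leviForm L x := by
    rcases eq_or_ne x 0 with rfl | hx0
    · simp [leviForm, dotC_eq_dotProduct]
    · have hxn : ‖x‖ ≠ 0 := norm_ne_zero_iff.2 hx0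
      have hmem : ((‖x‖⁻¹ : ℝ) : ℂ) • x ∈ Metric.sphere (0 : Fin n → ℂ) 1 := by
        simp [norm_smul, hxn]
      have h : leviForm L u ≤ leviForm L (((‖x‖⁻¹ : ℝ) : ℂ) • x) := hmin hmem
      rw [leviForm_smul] at h
      calc leviForm L u * ‖x‖ ^ 2 ≤ (‖x‖⁻¹ ^ 2 * leviForm L x) * ‖x‖ ^ 2 := by gcongr
        _ = leviForm L x := by field_simp
  calc leviForm L u / n * ∑ j, ‖x j‖ ^ 2 ≤ leviForm L u / n * (n * ‖x‖ ^ 2) := by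
        have := hpos u hu0
        gcongr
    _ = leviForm L u * ‖x‖ ^ 2 := by field_simp
    _ ≤ leviForm L x := hx

lemma integrable_exp_neg_mul_norm_sq_complex {b : ℝ} (hb : 0 < b) :
    Integrable fun z : ℂ => Real.exp (-b * ‖z‖ ^ 2) := by
  have h := (GaussianFourier.integrable_cexp_neg_mul_sq_norm_add (V := ℂ) (b := (b : ℂ))
    (by simpa using hb) 0 0).norm
  refine h.congr (Filter.Eventually.of_forall fun z => ?_)
  simp only [Complex.norm_exp]
  congr 1
  rw [← Complex.ofReal_neg, ← Complex.ofReal_pow, ← Complex.ofReal_mul, zero_mul, add_zero,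
    Complex.ofReal_re]

lemma lintegral_exp_neg_leviForm_ne_top {n : ℕ} {L : Matrix (Fin n) (Fin n) ℂ} (hn : 1 ≤ n)
    (hL : L.PosDef) :
    ∫⁻ x, ENNReal.ofReal (Real.exp (-2 * π * leviForm L x)) ≠ ⊤ := by
  obtain ⟨m, hm, hle⟩ := exists_pos_mul_sum_le_leviForm hn hL
  have hint : Integrable fun x : Fin n → ℂ => ∏ j, Real.exp (-(2 * π * m) * ‖x j‖ ^ 2) :=
    Integrable.fintype_prod fun _ => integrable_exp_neg_mul_norm_sq_complex (by positivity)
  refine ne_top_of_le_ne_top hint.lintegral_lt_top.ne (lintegral_mono fun x => ?_)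
  refine ENNReal.ofReal_le_ofReal ?_
  rw [← Real.exp_sum, ← Finset.mul_sum]
  refine Real.exp_le_exp.2 ?_
  have := mul_le_mul_of_nonneg_left (hle x) (by positivity : 0 ≤ 2 * π)
  linarith

lemma HPhiNormSq_coherentState_self {n : ℕ} {L : Matrix (Fin n) (Fin n) ℂ} (hL : L.IsHermitian)
    (P : Matrix (Fin n) (Fin n) ℂ) (w : Fin n → ℂ) :
    HPhiNormSq (weight L P) (coherentState L P w) =
      ENNReal.ofReal (Real.exp (2 * π * leviForm L w)) *
        ∫⁻ x, ENNReal.ofReal (Real.exp (-2 * π * leviForm L x)) := by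
  rw [← lintegral_sub_right_eq_self _ w, ← lintegral_const_mul' _ _ ENNReal.ofReal_ne_top,
    HPhiNormSq]
  refine lintegral_congr fun x => ?_
  rw [norm_sq_coherentState hL, ← ENNReal.ofReal_mul (by positivity), ← Real.exp_add,
    ← Real.exp_add]
  congr 2
  ring

lemma two_mul_exp_midpoint_le (a b : ℝ) :
    2 * Real.exp ((a + b) / 2) ≤ Real.exp a + Real.exp b := by
  have ha : Real.exp a = Real.exp (a / 2) ^ 2 := by rw [← Real.exp_nat_mul]; congr 1; push_cast; ring
  have hb : Real.exp b = Real.exp (b / 2) ^ 2 := by rw [← Real.exp_nat_mul]; congr 1; push_cast; ring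
  rw [add_div, Real.exp_add, ha, hb]
  nlinarith [sq_nonneg (Real.exp (a / 2) - Real.exp (b / 2))]

lemma le_HPhiNormSq_coherentState {n : ℕ} {L₁ : Matrix (Fin n) (Fin n) ℂ} (hL : L₁.IsHermitian)
    (P₁ L₂ P₂ : Matrix (Fin n) (Fin n) ℂ) (w : Fin n → ℂ) :
    ENNReal.ofReal (Real.exp (4 * π * (weight L₁ P₁ w - weight L₂ P₂ w) + 2 * π * leviForm L₁ w)) *
        ∫⁻ y, ENNReal.ofReal (Real.exp
          (4 * π * (weight L₁ P₁ y - weight L₂ P₂ y) - 2 * π * leviForm L₁ y)) ≤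
      HPhiNormSq (weight L₂ P₂) (coherentState L₁ P₁ w) := by
  set F : (Fin n → ℂ) → ℝ := fun x =>
    ‖coherentState L₁ P₁ w x‖ ^ 2 * Real.exp (-4 * π * weight L₂ P₂ x) with hF
  have hFx : ∀ x, F x = Real.exp (4 * π * weight L₁ P₁ x + 2 * π * leviForm L₁ w
      - 2 * π * leviForm L₁ (x - w) + -4 * π * weight L₂ P₂ x) := fun x => by
    rw [hF, Real.exp_add, ← norm_sq_coherentState hL]
  have hFc : Continuous F := by
    have := (differentiable_coherentState L₁ P₁ w).continuous
    have := continuous_weight L₂ P₂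
    fun_prop
  have hsum : HPhiNormSq (weight L₂ P₂) (coherentState L₁ P₁ w) +
      HPhiNormSq (weight L₂ P₂) (coherentState L₁ P₁ w) =
        ∫⁻ y, (ENNReal.ofReal (F (w + y)) + ENNReal.ofReal (F (w - y))) := by
    rw [lintegral_add_left (by fun_prop),
      lintegral_add_left_eq_self (fun x => ENNReal.ofReal (F x)) w,
      lintegral_sub_left_eq_self (fun x => ENNReal.ofReal (F x)) w]
    rfl
  rw [← ENNReal.mul_le_mul_iff_right two_ne_zero ENNReal.ofNat_ne_top, two_mul (HPhiNormSq _ _),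
    hsum, ← lintegral_const_mul' _ _ ENNReal.ofReal_ne_top,
    ← lintegral_const_mul' _ _ ENNReal.ofNat_ne_top]
  refine lintegral_mono fun y => ?_
  rw [← ENNReal.ofReal_mul (by positivity), ← Real.exp_add,
    ← ENNReal.ofReal_add (by positivity) (by positivity),
    show (2 : ℝ≥0∞) = ENNReal.ofReal 2 by simp, ← ENNReal.ofReal_mul (by positivity)]
  refine ENNReal.ofReal_le_ofReal ?_
  rw [hFx, hFx]
  refine le_trans (le_of_eq ?_) (two_mul_exp_midpoint_le _ _)
  have h₁ := weight_parallelogram L₁ P₁ w y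
  have h₂ := weight_parallelogram L₂ P₂ w y
  have e₁ : leviForm L₁ (w + y - w) = leviForm L₁ y := by rw [add_sub_cancel_left]
  have e₂ : leviForm L₁ (w - y - w) = leviForm L₁ y := by
    rw [sub_sub_cancel_left, leviForm_neg]
  rw [e₁, e₂]
  congr 2
  linear_combination (-2 * π) * h₁ + (2 * π) * h₂

lemma HPhiNorm_sq {n : ℕ} (Φ : (Fin n → ℂ) → ℝ) (f : (Fin n → ℂ) → ℂ) :
    HPhiNorm Φ f ^ 2 = HPhiNormSq Φ f := by
  rw [HPhiNorm, ← ENNReal.rpow_natCast, ← ENNReal.rpow_mul]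
  norm_num

/-- A bounded embedding forces the weights to be ordered. -/
lemma weight_le_of_bounded {n : ℕ} (hn : 1 ≤ n) {L₁ P₁ L₂ P₂ : Matrix (Fin n) (Fin n) ℂ}
    (hL₁ : L₁.PosDef) {C : ℝ}
    (hC : ∀ f : (Fin n → ℂ) → ℂ, Differentiable ℂ f →
      HPhiNorm (weight L₂ P₂) f ≤ ENNReal.ofReal C * HPhiNorm (weight L₁ P₁) f)
    (x : Fin n → ℂ) : weight L₁ P₁ x ≤ weight L₂ P₂ x := by
  by_contra! hlt
  set c := ∫⁻ x, ENNReal.ofReal (Real.exp (-2 * π * leviForm L₁ x))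
  have hc : c ≠ ⊤ := lintegral_exp_neg_leviForm_ne_top hn hL₁
  set K := ∫⁻ y, ENNReal.ofReal (Real.exp
    (4 * π * (weight L₁ P₁ y - weight L₂ P₂ y) - 2 * π * leviForm L₁ y)) with hK
  have hK0 : K ≠ 0 := by
    have h₁ := continuous_weight L₁ P₁
    have h₂ := continuous_weight L₂ P₂
    have h₃ := continuous_leviForm L₁
    rw [hK, Ne, lintegral_eq_zero_iff (by fun_prop)]
    intro h
    obtain ⟨y, hy⟩ := h.exists
    exact (ENNReal.ofReal_pos.2 (Real.exp_pos _)).ne' hy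
  have hbound : ∀ w, ENNReal.ofReal (Real.exp (4 * π * (weight L₁ P₁ w - weight L₂ P₂ w))) * K ≤
      ENNReal.ofReal C ^ 2 * c := by
    intro w
    have h := pow_le_pow_left' (hC _ (differentiable_coherentState L₁ P₁ w)) 2
    rw [mul_pow, HPhiNorm_sq, HPhiNorm_sq, HPhiNormSq_coherentState_self hL₁.isHermitian] at h
    have h' := (le_HPhiNormSq_coherentState hL₁.isHermitian P₁ L₂ P₂ w).trans h
    rw [Real.exp_add, ENNReal.ofReal_mul (by positivity), mul_right_comm, mul_left_comm,
      mul_comm] at h'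
    exact (ENNReal.mul_le_mul_iff_right (ENNReal.ofReal_pos.2 (Real.exp_pos _)).ne'
      ENNReal.ofReal_ne_top).1 h'
  have hB : ENNReal.ofReal C ^ 2 * c / K ≠ ⊤ :=
    ENNReal.div_ne_top (ENNReal.mul_ne_top (ENNReal.pow_ne_top ENNReal.ofReal_ne_top) hc) hK0
  have hKtop : K ≠ ⊤ := by
    have h0 := hbound 0
    have hz : ∀ L P : Matrix (Fin n) (Fin n) ℂ, weight L P 0 = 0 := fun L P => by
      simp [weight, dotC_eq_dotProduct]
    simp only [hz, sub_zero, mul_zero, Real.exp_zero, ENNReal.ofReal_one, one_mul] at h0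
    exact ne_top_of_le_ne_top
      (ENNReal.mul_ne_top (ENNReal.pow_ne_top ENNReal.ofReal_ne_top) hc) h0
  set B := (ENNReal.ofReal C ^ 2 * c / K).toReal
  have hexp : ∀ w, Real.exp (4 * π * (weight L₁ P₁ w - weight L₂ P₂ w)) ≤ B := fun w =>
    (ENNReal.ofReal_le_iff_le_toReal hB).1
      ((ENNReal.le_div_iff_mul_le (.inl hK0) (.inl hKtop)).2 (hbound w))
  set d := 4 * π * (weight L₁ P₁ x - weight L₂ P₂ x) with hd
  have hd0 : 0 < d := mul_pos (by positivity) (sub_pos.2 hlt)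
  have hB0 : 0 ≤ B := ENNReal.toReal_nonneg
  have h := hexp ((√(B / d) : ℂ) • x)
  rw [weight_smul, weight_smul, Real.sq_sqrt (by positivity)] at h
  have he : 4 * π * (B / d * weight L₁ P₁ x - B / d * weight L₂ P₂ x) = B := by
    rw [show 4 * π * (B / d * weight L₁ P₁ x - B / d * weight L₂ P₂ x) = B / d * d by
      rw [hd]; ring]
    field_simp
  rw [he] at h
  linarith [Real.add_one_le_exp B]

lemma HPhiNorm_anti {n : ℕ} {Φ₁ Φ₂ : (Fin n → ℂ) → ℝ} (h : ∀ x, Φ₁ x ≤ Φ₂ x)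
    (f : (Fin n → ℂ) → ℂ) : HPhiNorm Φ₂ f ≤ HPhiNorm Φ₁ f := by
  refine ENNReal.rpow_le_rpow (lintegral_mono fun x => ENNReal.ofReal_le_ofReal ?_) (by norm_num)
  refine mul_le_mul_of_nonneg_left (Real.exp_le_exp.2 ?_) (by positivity)
  have := mul_le_mul_of_nonneg_left (h x) (by positivity : 0 ≤ 4 * π)
  linarith

/-- the embedding H_{Φ₁} ⊆ H_{Φ₂} is bounded iff Φ₁ ≤ Φ₂. -/
theorem embedding_bounded_iff_le (n : ℕ) (hn : 1 ≤ n)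
    (L₁ P₁ L₂ P₂ : Matrix (Fin n) (Fin n) ℂ)
    (hL₁ : L₁.PosDef) (hL₂ : L₂.PosDef) (hP₁ : P₁.IsSymm) (hP₂ : P₂.IsSymm) :
    (∃ C : ℝ, 0 < C ∧ ∀ f : (Fin n → ℂ) → ℂ, Differentiable ℂ f →
        HPhiNorm (weight L₂ P₂) f ≤ ENNReal.ofReal C * HPhiNorm (weight L₁ P₁) f) ↔
      ∀ x, weight L₁ P₁ x ≤ weight L₂ P₂ x := by
  refine ⟨fun ⟨C, _, hC⟩ => weight_le_of_bounded hn hL₁ hC, fun h => ⟨1, one_pos, fun f _ => ?_⟩⟩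
  simpa using HPhiNorm_anti h f

end
end

section
/- Let Φ₁, Φ₂ : ℂⁿ → ℝ be real-quadratic weights with positive definite Levi matrices, and assume Φ₁(x) ≤ Φ₂(x) for all x ∈ ℂⁿ. Then there exist real numbers μ₁, …, μₙ ∈ (0, 1] such that, counted with algebraic multiplicity, the eigenvalues of the 2n×2n complex matrix 𝐀_{Φ₂}⁻¹𝐀_{Φ₁} are exactly μ₁, …, μₙ together with μ₁⁻¹, …, μₙ⁻¹; that is, the multiset of roots of its characteristic polynomial is {μ₁, …, μₙ, μ₁⁻¹, …, μₙ⁻¹}. -/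
open MeasureTheory Real Matrix
open scoped ENNReal ComplexOrder

noncomputable section

section Roots

open Polynomial

lemma reverse_prod_X_sub_C_roots {K : Type*} [Field K] (s : Multiset K) (hs : (0 : K) ∉ s) :
    ((s.map fun a => X - C a).prod.reverse).roots = s.map (·⁻¹) := by
  induction s using Multiset.induction_on with
  | empty =>
    rw [Multiset.map_zero, Multiset.prod_zero, ← C_1, reverse_C, roots_C, Multiset.map_zero]
  | cons a s ih =>
    rw [Multiset.mem_cons, not_or] at hs
    have ha : a ≠ 0 := fun h => hs.1 h.symm
    have hrev : (X - C a : K[X]).reverse = C (-a) * (X - C a⁻¹) := by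
      rw [reverse, natDegree_X_sub_C, sub_eq_add_neg, ← C_neg, reflect_add, reflect_C,
        ← pow_one (X : K[X]), reflect_monomial]
      simp only [revAt_le le_rfl, tsub_self, pow_zero, pow_one, C_neg, mul_sub, neg_mul, ← C_mul,
        mul_inv_cancel₀ ha, C_1]
      ring
    have hne : (s.map fun a => X - C a).prod.reverse ≠ 0 := by
      rw [Ne, reverse_eq_zero]
      exact (monic_multiset_prod_of_monic _ _ fun a _ => monic_X_sub_C a).ne_zero
    rw [Multiset.map_cons, Multiset.prod_cons, reverse_mul_of_domain, roots_mul, hrev,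
      roots_C_mul _ (neg_ne_zero.2 ha), roots_X_sub_C, ih hs.2, Multiset.map_cons,
      Multiset.singleton_add]
    rw [hrev]
    exact mul_ne_zero (mul_ne_zero (C_ne_zero.2 (neg_ne_zero.2 ha)) (X_sub_C_ne_zero _)) hne

lemma charpoly_inv_roots {ι K : Type*} [Fintype ι] [DecidableEq ι] [Field K] [IsAlgClosed K]
    (A : Matrix ι ι K) (hA : IsUnit A) :
    A⁻¹.charpoly.roots = A.charpoly.roots.map (·⁻¹) := by
  have hdet : A.det ≠ 0 := ((isUnit_iff_isUnit_det A).1 hA).ne_zero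
  have h0 : (0 : K) ∉ A.charpoly.roots := by
    intro h
    have h1 := isRoot_of_mem_roots h
    rw [IsRoot.def, eval_charpoly, map_zero, zero_sub, det_neg] at h1
    exact mul_ne_zero (pow_ne_zero _ (neg_ne_zero.2 one_ne_zero)) hdet h1
  have hprod : (A.charpoly.roots.map fun a => X - C a).prod = A.charpoly :=
    ((IsAlgClosed.splits A.charpoly).eq_prod_roots_of_monic (charpoly_monic A)).symm
  have hC : ((-1) ^ Fintype.card ι * C (Ring.inverse A.det) : K[X]) =
      C ((-1) ^ Fintype.card ι * (A.det)⁻¹) := by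
    simp
  rw [charpoly_inv A hA, hC, roots_C_mul, ← reverse_charpoly]
  · conv_lhs => rw [← hprod]
    exact reverse_prod_X_sub_C_roots _ h0
  · exact mul_ne_zero (pow_ne_zero _ (neg_ne_zero.2 one_ne_zero)) (inv_ne_zero hdet)

end Roots

/-- A multiset of `2n` positive reals that is invariant under inversion splits into `n` elements
of `(0, 1]` and their inverses. -/
lemma exists_pairing_of_map_inv_eq (n : ℕ) (m : Multiset ℝ) (hpos : ∀ x ∈ m, 0 < x)
    (hinv : m.map (·⁻¹) = m) (hcard : m.card = n + n) :
    ∃ μ : Fin n → ℝ, (∀ j, μ j ∈ Set.Ioc (0 : ℝ) 1) ∧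
      m = Finset.univ.val.map μ + Finset.univ.val.map (fun j => (μ j)⁻¹) := by
  set s := m.filter (· < 1) with hs
  set u := m.filter (1 < ·) with hu
  have hus : u = s.map (·⁻¹) := by
    rw [hu]
    conv_lhs => rw [← hinv]
    rw [Multiset.filter_map, hs]
    congr 1
    refine Multiset.filter_congr fun x hx => ?_
    exact one_lt_inv₀ (hpos x hx)
  have hsplit : m = s + (u + Multiset.replicate (m.count 1) 1) := by
    rw [← Multiset.filter_eq', hs, hu]
    conv_lhs => rw [← Multiset.filter_add_not (· < 1) m]
    congr 1
    conv_lhs => rw [← Multiset.filter_add_not (1 < ·) (m.filter fun x => ¬ x < 1)]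
    rw [Multiset.filter_filter, Multiset.filter_filter]
    congr 1
    · refine Multiset.filter_congr fun x _ => ?_
      exact ⟨fun h => h.1, fun h => ⟨h, not_lt.2 h.le⟩⟩
    · refine Multiset.filter_congr fun x _ => ?_
      rw [not_lt, not_lt]
      exact ⟨fun h => le_antisymm h.1 h.2, fun h => ⟨h.le, h.ge⟩⟩
  have hc : n + n = s.card + (s.card + m.count 1) := by
    rw [← hcard]
    conv_lhs => rw [hsplit]
    rw [hus]
    simp
  obtain ⟨k, hk⟩ : ∃ k, m.count 1 = k + k := ⟨n - s.card, by omega⟩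
  set t := s + Multiset.replicate k 1 with ht
  have htc : t.toList.length = n := by
    rw [Multiset.length_toList, ht, Multiset.card_add, Multiset.card_replicate]
    omega
  have hmap : Finset.univ.val.map (fun j : Fin n => t.toList.get (j.cast htc.symm)) = t := by
    subst htc
    conv_rhs => rw [← Multiset.coe_toList t]
    rw [Fin.univ_val_map]
    exact congrArg _ (List.ofFn_get t.toList)
  refine ⟨fun j => t.toList.get (j.cast htc.symm), fun j => ?_, ?_⟩
  · have hmem : t.toList.get (j.cast htc.symm) ∈ t :=
      Multiset.mem_toList.1 (List.get_mem _ _)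
    rcases Multiset.mem_add.1 hmem with h | h
    · rw [hs, Multiset.mem_filter] at h
      exact ⟨hpos _ h.1, h.2.le⟩
    · have h1 := Multiset.eq_of_mem_replicate h
      exact ⟨one_pos.trans_eq h1.symm, h1.le⟩
  · have hmap' : Finset.univ.val.map (fun j : Fin n => (t.toList.get (j.cast htc.symm))⁻¹) =
        t.map (·⁻¹) := by
      conv_rhs => rw [← hmap]
      rw [Multiset.map_map]
      rfl
    rw [hmap, hmap', ht, Multiset.map_add, Multiset.map_replicate, inv_one, ← hus]
    conv_lhs => rw [hsplit, hk, Multiset.replicate_add]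
    abel

lemma conjM_mul {m : Type*} [Fintype m] (A B : Matrix m m ℂ) :
    conjM (A * B) = conjM A * conjM B :=
  Matrix.map_mul

lemma conjM_conjM {m : Type*} (A : Matrix m m ℂ) : conjM (conjM A) = A := by
  ext i j
  simp [conjM]

lemma conjM_eq_transpose {m : Type*} {A : Matrix m m ℂ} (hA : A.IsHermitian) :
    conjM A = Aᵀ := by
  ext i j
  exact hA.apply j i

lemma conjM_fromBlocks {m : Type*} (A B C D : Matrix m m ℂ) :
    conjM (fromBlocks A B C D) = fromBlocks (conjM A) (conjM B) (conjM C) (conjM D) :=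
  fromBlocks_map A B C D _

lemma conjM_Amat {n : ℕ} (L P : Matrix (Fin n) (Fin n) ℂ) :
    conjM (Amat L P) = fromBlocks (-(L⁻¹ * conjM P)) (-(Complex.I • L⁻¹))
      (-(Complex.I • (conjM L - P * L⁻¹ * conjM P))) (-(P * L⁻¹)) := by
  have hneg : ∀ A : Matrix (Fin n) (Fin n) ℂ, conjM (-A) = -conjM A := fun A => by
    ext; simp [conjM]
  have hsmul : ∀ A : Matrix (Fin n) (Fin n) ℂ, conjM (Complex.I • A) = -(Complex.I • conjM A) :=
    fun A => by ext; simp [conjM]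
  have hsub : ∀ A B : Matrix (Fin n) (Fin n) ℂ, conjM (A - B) = conjM A - conjM B :=
    fun A B => by ext; simp [conjM]
  simp only [Amat, conjM_fromBlocks, hneg, hsmul, hsub, conjM_mul, conjM_conjM]

/-- `Amat L P` is the matrix of an antilinear involution. -/
lemma Amat_mul_conjM {n : ℕ} {L : Matrix (Fin n) (Fin n) ℂ} (hL : IsUnit L.det)
    (P : Matrix (Fin n) (Fin n) ℂ) : Amat L P * conjM (Amat L P) = 1 := by
  have h1 : L * L⁻¹ = 1 := mul_nonsing_inv L hL
  have h2 : conjM L⁻¹ * conjM L = 1 := by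
    rw [← conjM_mul, nonsing_inv_mul L hL]
    ext i j
    simp [conjM, Matrix.one_apply, apply_ite]
  rw [conjM_Amat, Amat, fromBlocks_multiply, ← fromBlocks_one]
  simp only [conjM_mul]
  congr 1
  · simp only [neg_mul, mul_neg, neg_neg, smul_mul_smul_comm, Complex.I_mul_I, mul_sub, h2,
      neg_smul, one_smul, ← mul_assoc]
    abel
  · simp only [neg_mul, mul_neg, smul_mul_assoc, mul_smul_comm, smul_neg, neg_neg, ← mul_assoc]
    abel
  · have h3 : conjM P * conjM L⁻¹ * conjM L = conjM P := by rw [mul_assoc, h2, mul_one]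
    simp only [neg_mul, mul_neg, smul_mul_assoc, mul_smul_comm, sub_mul, mul_sub, smul_sub,
      smul_neg, ← mul_assoc, h1, h3, one_mul]
    abel
  · simp only [neg_mul, mul_neg, neg_neg, smul_mul_smul_comm, Complex.I_mul_I, sub_mul, h1,
      neg_smul, one_smul, ← mul_assoc]
    abel

/-- The lower unipotent block matrix shearing `(x, ξ)` to `(x, ξ + iPx)`. -/
def shear {n : ℕ} (P : Matrix (Fin n) (Fin n) ℂ) : Matrix (Fin n ⊕ Fin n) (Fin n ⊕ Fin n) ℂ :=
  fromBlocks 1 0 (Complex.I • P) 1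

/-- The Hermitian matrix of the form `(x, ξ) ↦ x* L x - η* (Lᵀ)⁻¹ η` with `η = ξ + iPx`. -/
def hermMat {n : ℕ} (L P : Matrix (Fin n) (Fin n) ℂ) :
    Matrix (Fin n ⊕ Fin n) (Fin n ⊕ Fin n) ℂ :=
  (shear P)ᴴ * fromBlocks L 0 0 (-(L⁻¹)ᵀ) * shear P

lemma hermMat_isHermitian {n : ℕ} {L : Matrix (Fin n) (Fin n) ℂ} (hL : L.IsHermitian)
    (P : Matrix (Fin n) (Fin n) ℂ) : (hermMat L P).IsHermitian := by
  refine isHermitian_conjTranspose_mul_mul _ (IsHermitian.fromBlocks hL (by simp) ?_)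
  exact hL.inv.transpose.neg

/-- Up to a constant matrix, `Amat L P` is `hermMat L P`. -/
lemma Amat_eq_mul_hermMat {n : ℕ} {L P : Matrix (Fin n) (Fin n) ℂ} (hL : L.IsHermitian)
    (hP : P.IsSymm) :
    Amat L P = fromBlocks 0 (-(Complex.I • 1)) (Complex.I • 1) 0 * hermMat L P := by
  have hPc : Pᴴ = conjM P := by
    rw [conjTranspose, hP.eq]
    rfl
  rw [hermMat, shear, fromBlocks_conjTranspose, fromBlocks_multiply, fromBlocks_multiply,
    fromBlocks_multiply, Amat, conjM_mul, conjM_eq_transpose hL.inv, conjTranspose_smul, hPc]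
  congr 1 <;> simp [smul_smul, mul_assoc, sub_eq_add_neg]

lemma hermMat_quad {n : ℕ} (L P : Matrix (Fin n) (Fin n) ℂ) (x ξ : Fin n → ℂ) :
    star (Sum.elim x ξ) ⬝ᵥ hermMat L P *ᵥ Sum.elim x ξ =
      star x ⬝ᵥ L *ᵥ x -
        star (ξ + Complex.I • P *ᵥ x) ⬝ᵥ (L⁻¹)ᵀ *ᵥ (ξ + Complex.I • P *ᵥ x) := by
  have hshear : shear P *ᵥ Sum.elim x ξ = Sum.elim x (ξ + Complex.I • P *ᵥ x) := by
    rw [shear, fromBlocks_mulVec]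
    simp [add_comm, smul_mulVec]
  have hstar : ∀ a b : Fin n → ℂ, star (Sum.elim a b) = Sum.elim (star a) (star b) := by
    intro a b
    ext (i | i) <;> rfl
  rw [hermMat, ← mulVec_mulVec, ← mulVec_mulVec, dotProduct_mulVec, ← star_mulVec, hshear,
    fromBlocks_mulVec, hstar]
  simp [sumElim_dotProduct_sumElim, neg_mulVec, sub_eq_add_neg]

lemma dotProduct_mulVec_conj {m : Type*} [Fintype m] {N : Matrix m m ℂ} (hN : N.IsHermitian)
    (v w : m → ℂ) : (star v ⬝ᵥ N *ᵥ w).re = (star w ⬝ᵥ N *ᵥ v).re := by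
  have h : star (star v ⬝ᵥ N *ᵥ w) = star w ⬝ᵥ N *ᵥ v := by
    rw [star_dotProduct, star_star, star_mulVec, hN.eq, ← dotProduct_mulVec]
  rw [← h]
  rfl

lemma neg_quad_le_legendre {m : Type*} [Fintype m] {N : Matrix m m ℂ} (hN : N.PosSemidef)
    (w y : m → ℂ) :
    -(star w ⬝ᵥ N *ᵥ w).re ≤ (star y ⬝ᵥ N *ᵥ y).re - 2 * (star y ⬝ᵥ N *ᵥ w).re := by
  have h := (Complex.le_def.1 (hN.dotProduct_mulVec_nonneg (y - w))).1
  have hs := dotProduct_mulVec_conj hN.1 w y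
  simp only [star_sub, mulVec_sub, sub_dotProduct, dotProduct_sub, Complex.sub_re,
    Complex.zero_re] at h
  linarith

/-- Polarization of the weight. -/
lemma weight_add_weight {n : ℕ} (L P : Matrix (Fin n) (Fin n) ℂ) (hP : P.IsSymm)
    (a b : Fin n → ℂ) :
    weight L P (a + b) + weight L P (Complex.I • (a - b)) =
      (star a ⬝ᵥ L *ᵥ a).re + (star b ⬝ᵥ L *ᵥ b).re + 2 * (a ⬝ᵥ P *ᵥ b).re := by
  have hdot : ∀ u v : Fin n → ℂ, dotC u v = v ⬝ᵥ u := fun u v => by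
    simp [dotC, dotProduct, mul_comm]
  have hsymm : b ⬝ᵥ P *ᵥ a = a ⬝ᵥ P *ᵥ b := by
    rw [dotProduct_mulVec, dotProduct_comm, ← mulVec_transpose, hP.eq]
  simp only [weight, hdot, star_add, star_sub, star_smul, mulVec_add, mulVec_sub, mulVec_smul,
    add_dotProduct, dotProduct_add, sub_dotProduct, dotProduct_sub, smul_dotProduct,
    dotProduct_smul, hsymm, smul_eq_mul, Complex.star_def, Complex.conj_I, Complex.add_re,
    Complex.sub_re, Complex.sub_im, Complex.mul_re, Complex.mul_im, Complex.neg_re,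
    Complex.neg_im, Complex.I_re, Complex.I_im]
  ring

lemma polarized_le {n : ℕ} {L₁ P₁ L₂ P₂ : Matrix (Fin n) (Fin n) ℂ}
    (hP₁ : P₁.IsSymm) (hP₂ : P₂.IsSymm) (hle : ∀ x, weight L₁ P₁ x ≤ weight L₂ P₂ x)
    (x y : Fin n → ℂ) :
    (star x ⬝ᵥ L₁ *ᵥ x).re + (star y ⬝ᵥ L₁ᵀ *ᵥ y).re -
        2 * (star y ⬝ᵥ Complex.I • P₁ *ᵥ x).re ≤
      (star x ⬝ᵥ L₂ *ᵥ x).re + (star y ⬝ᵥ L₂ᵀ *ᵥ y).re -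
        2 * (star y ⬝ᵥ Complex.I • P₂ *ᵥ x).re := by
  have key : ∀ L P : Matrix (Fin n) (Fin n) ℂ, P.IsSymm →
      (star x ⬝ᵥ L *ᵥ x).re + (star y ⬝ᵥ Lᵀ *ᵥ y).re -
        2 * (star y ⬝ᵥ Complex.I • P *ᵥ x).re =
      weight L P (x + -Complex.I • star y) +
        weight L P (Complex.I • (x - -Complex.I • star y)) := by
    intro L P hP
    have h1 : star y ⬝ᵥ Lᵀ *ᵥ y = y ⬝ᵥ L *ᵥ star y := by
      rw [mulVec_transpose, dotProduct_comm, ← dotProduct_mulVec]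
    have h2 : star y ⬝ᵥ P *ᵥ x = x ⬝ᵥ P *ᵥ star y := by
      rw [dotProduct_mulVec, dotProduct_comm, ← mulVec_transpose, hP.eq]
    rw [weight_add_weight L P hP, h1, dotProduct_smul, h2]
    simp [mulVec_smul, mulVec_neg, ← mul_assoc]
  rw [key L₁ P₁ hP₁, key L₂ P₂ hP₂]
  exact add_le_add (hle _) (hle _)

lemma hermMat_quad_mono {n : ℕ} {L₁ P₁ L₂ P₂ : Matrix (Fin n) (Fin n) ℂ}
    (hL₁ : L₁.PosDef) (hL₂ : L₂.PosDef) (hP₁ : P₁.IsSymm) (hP₂ : P₂.IsSymm)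
    (hle : ∀ x, weight L₁ P₁ x ≤ weight L₂ P₂ x) (v : Fin n ⊕ Fin n → ℂ) :
    (star v ⬝ᵥ hermMat L₁ P₁ *ᵥ v).re ≤ (star v ⬝ᵥ hermMat L₂ P₂ *ᵥ v).re := by
  obtain ⟨x, ξ, rfl⟩ : ∃ x ξ, v = Sum.elim x ξ := ⟨_, _, (Sum.elim_comp_inl_inr v).symm⟩
  have key : ∀ {L : Matrix (Fin n) (Fin n) ℂ}, L.PosDef → ∀ η : Fin n → ℂ,
      Lᵀ *ᵥ (L⁻¹)ᵀ *ᵥ η = η ∧ star η ⬝ᵥ (L⁻¹)ᵀ *ᵥ η =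
        star ((L⁻¹)ᵀ *ᵥ η) ⬝ᵥ Lᵀ *ᵥ (L⁻¹)ᵀ *ᵥ η := by
    intro L hL η
    have h : Lᵀ *ᵥ (L⁻¹)ᵀ *ᵥ η = η := by
      rw [mulVec_mulVec, ← transpose_mul,
        nonsing_inv_mul L ((isUnit_iff_isUnit_det L).1 hL.isUnit), transpose_one, one_mulVec]
    refine ⟨h, ?_⟩
    rw [h, star_mulVec, (hL.1.inv.transpose).eq, ← dotProduct_mulVec]
  rw [hermMat_quad, hermMat_quad, Complex.sub_re, Complex.sub_re]
  set η₁ := ξ + Complex.I • P₁ *ᵥ x with hη₁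
  set η₂ := ξ + Complex.I • P₂ *ᵥ x with hη₂
  set y := (L₂⁻¹)ᵀ *ᵥ η₂ with hy
  have h1 := neg_quad_le_legendre hL₁.posSemidef.transpose ((L₁⁻¹)ᵀ *ᵥ η₁) y
  rw [← (key hL₁ η₁).2, (key hL₁ η₁).1] at h1
  have h2 : star η₂ ⬝ᵥ y = star y ⬝ᵥ L₂ᵀ *ᵥ y := (key hL₂ η₂).2
  have h3 : star y ⬝ᵥ L₂ᵀ *ᵥ y = star y ⬝ᵥ η₂ := by rw [hy, (key hL₂ η₂).1]
  have h4 := polarized_le hP₁ hP₂ hle x y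
  have h5 : (star y ⬝ᵥ η₁).re = (star y ⬝ᵥ ξ).re + (star y ⬝ᵥ Complex.I • P₁ *ᵥ x).re := by
    rw [hη₁, dotProduct_add, Complex.add_re]
  have h6 : (star y ⬝ᵥ η₂).re = (star y ⬝ᵥ ξ).re + (star y ⬝ᵥ Complex.I • P₂ *ᵥ x).re := by
    rw [hη₂, dotProduct_add, Complex.add_re]
  rw [h2]
  rw [← h3] at h6
  linarith

lemma quad_im_eq_zero {m : Type*} [Fintype m] {N : Matrix m m ℂ} (hN : N.IsHermitian)
    (v : m → ℂ) : (star v ⬝ᵥ N *ᵥ v).im = 0 :=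
  hN.im_star_dotProduct_mulVec_self v

lemma hermMat_sub_posSemidef {n : ℕ} {L₁ P₁ L₂ P₂ : Matrix (Fin n) (Fin n) ℂ}
    (hL₁ : L₁.PosDef) (hL₂ : L₂.PosDef) (hP₁ : P₁.IsSymm) (hP₂ : P₂.IsSymm)
    (hle : ∀ x, weight L₁ P₁ x ≤ weight L₂ P₂ x) :
    (hermMat L₂ P₂ - hermMat L₁ P₁).PosSemidef := by
  have hH := (hermMat_isHermitian hL₂.1 P₂).sub (hermMat_isHermitian hL₁.1 P₁)
  refine .of_dotProduct_mulVec_nonneg hH fun v => ?_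
  rw [Complex.le_def]
  refine ⟨?_, (quad_im_eq_zero hH v).symm⟩
  have h := hermMat_quad_mono hL₁ hL₂ hP₁ hP₂ hle v
  rw [sub_mulVec, dotProduct_sub, Complex.sub_re, Complex.zero_re]
  linarith

/-- The pencil `hermMat L₁ P₁ + s • hermMat L₂ P₂` is nonsingular for `s ≥ 0`. -/
lemma eq_zero_of_hermMat_add_smul_mulVec_eq_zero {n : ℕ}
    {L₁ P₁ L₂ P₂ : Matrix (Fin n) (Fin n) ℂ}
    (hL₁ : L₁.PosDef) (hL₂ : L₂.PosDef) (hP₁ : P₁.IsSymm) (hP₂ : P₂.IsSymm)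
    (hle : ∀ x, weight L₁ P₁ x ≤ weight L₂ P₂ x) {s : ℝ} (hs : 0 ≤ s)
    {v : Fin n ⊕ Fin n → ℂ}
    (hv : hermMat L₁ P₁ *ᵥ v + (s : ℂ) • hermMat L₂ P₂ *ᵥ v = 0) : v = 0 := by
  obtain ⟨x, ξ, rfl⟩ : ∃ x ξ, v = Sum.elim x ξ := ⟨_, _, (Sum.elim_comp_inl_inr v).symm⟩
  set a : Fin n ⊕ Fin n → ℂ := Sum.elim x (-(Complex.I • P₁ *ᵥ x)) with ha
  set η := ξ + Complex.I • P₁ *ᵥ x with hη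
  set b : Fin n ⊕ Fin n → ℂ := Sum.elim 0 η with hb
  have hab : Sum.elim x ξ = a + b := by
    rw [ha, hb, ← Sum.elim_add_add, hη]
    congr 1 <;> abel
  have hmono := hermMat_quad_mono hL₁ hL₂ hP₁ hP₂ hle
  have hH₁ := hermMat_isHermitian hL₁.1 P₁
  have hH₂ := hermMat_isHermitian hL₂.1 P₂
  have ha₁ : (star a ⬝ᵥ hermMat L₁ P₁ *ᵥ a).re = (star x ⬝ᵥ L₁ *ᵥ x).re := by
    rw [ha, hermMat_quad]
    simp
  have hb₁ : (star b ⬝ᵥ hermMat L₁ P₁ *ᵥ b).re = -(star η ⬝ᵥ (L₁⁻¹)ᵀ *ᵥ η).re := by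
    rw [hb, hermMat_quad]
    simp
  have hb₂ : (star b ⬝ᵥ hermMat L₂ P₂ *ᵥ b).re = -(star η ⬝ᵥ (L₂⁻¹)ᵀ *ᵥ η).re := by
    rw [hb, hermMat_quad]
    simp
  have hx0 := (Complex.le_def.1 (hL₁.posSemidef.dotProduct_mulVec_nonneg x)).1
  have hη₁ := (Complex.le_def.1 (hL₁.inv.transpose.posSemidef.dotProduct_mulVec_nonneg η)).1
  have hη₂ := (Complex.le_def.1 (hL₂.inv.transpose.posSemidef.dotProduct_mulVec_nonneg η)).1
  rw [Complex.zero_re] at hx0 hη₁ hη₂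
  have hpair : ∀ c : Fin n ⊕ Fin n → ℂ,
      (star c ⬝ᵥ hermMat L₁ P₁ *ᵥ a).re + (star c ⬝ᵥ hermMat L₁ P₁ *ᵥ b).re +
        s * ((star c ⬝ᵥ hermMat L₂ P₂ *ᵥ a).re + (star c ⬝ᵥ hermMat L₂ P₂ *ᵥ b).re) = 0 := by
    intro c
    have h := congrArg (fun w => (star c ⬝ᵥ w).re) hv
    simpa [hab, mulVec_add, dotProduct_add, dotProduct_smul, mul_add] using h
  have hpa := hpair a
  have hpb := hpair b
  rw [dotProduct_mulVec_conj hH₁ b a, dotProduct_mulVec_conj hH₂ b a] at hpb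
  have hsa : 0 ≤ s * (star a ⬝ᵥ hermMat L₂ P₂ *ᵥ a).re :=
    mul_nonneg hs (by linarith [hmono a])
  have hsb : 0 ≤ s * (star η ⬝ᵥ (L₂⁻¹)ᵀ *ᵥ η).re := mul_nonneg hs hη₂
  rw [ha₁] at hpa
  rw [hb₁, hb₂] at hpb
  have hxz : (star x ⬝ᵥ L₁ *ᵥ x).re = 0 := by linarith
  have hηz : (star η ⬝ᵥ (L₁⁻¹)ᵀ *ᵥ η).re = 0 := by linarith
  have hx : x = 0 := by
    by_contra h
    exact (Complex.lt_def.1 (hL₁.dotProduct_mulVec_pos h)).1.ne' hxz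
  have hη' : η = 0 := by
    by_contra h
    exact (Complex.lt_def.1 (hL₁.inv.transpose.dotProduct_mulVec_pos h)).1.ne' hηz
  rw [hab, ha, hb, hη', hx]
  simp

lemma eigenvalue_pos {n : ℕ} {L₁ P₁ L₂ P₂ : Matrix (Fin n) (Fin n) ℂ}
    (hL₁ : L₁.PosDef) (hL₂ : L₂.PosDef) (hP₁ : P₁.IsSymm) (hP₂ : P₂.IsSymm)
    (hle : ∀ x, weight L₁ P₁ x ≤ weight L₂ P₂ x) {z : ℂ} {v : Fin n ⊕ Fin n → ℂ} (hv : v ≠ 0)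
    (hz : hermMat L₁ P₁ *ᵥ v = z • hermMat L₂ P₂ *ᵥ v) : ((z.re : ℝ) : ℂ) = z ∧ 0 < z.re := by
  have hreal : ((z.re : ℝ) : ℂ) = z := by
    have h := congrArg (fun w => star v ⬝ᵥ w) hz
    simp only [dotProduct_smul, smul_eq_mul] at h
    have him₁ := quad_im_eq_zero (hermMat_isHermitian hL₁.1 P₁) v
    have him₂ := quad_im_eq_zero (hermMat_isHermitian hL₂.1 P₂) v
    have him := congrArg Complex.im h
    rw [him₁, Complex.mul_im, him₂, mul_zero, zero_add] at him
    rcases mul_eq_zero.1 him.symm with h0 | h0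
    · exact Complex.ext rfl h0.symm
    · have hq₂ : star v ⬝ᵥ hermMat L₂ P₂ *ᵥ v = 0 := Complex.ext h0 him₂
      rw [hq₂, mul_zero] at h
      have hS := (hermMat_sub_posSemidef hL₁ hL₂ hP₁ hP₂ hle).dotProduct_mulVec_zero_iff v
      rw [sub_mulVec, dotProduct_sub, hq₂, h, sub_zero, eq_self, true_iff, sub_eq_zero, hz] at hS
      have hz1 : (1 - z) • hermMat L₂ P₂ *ᵥ v = 0 := by
        rw [sub_smul, one_smul, ← hS, sub_self]
      rcases smul_eq_zero.1 hz1 with h1 | h1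
      · rw [← sub_eq_zero.1 h1]
        simp
      · refine absurd (eq_zero_of_hermMat_add_smul_mulVec_eq_zero hL₁ hL₂ hP₁ hP₂ hle le_rfl ?_) hv
        rw [hz, h1]
        simp
  refine ⟨hreal, not_le.1 fun hneg => hv ?_⟩
  refine eq_zero_of_hermMat_add_smul_mulVec_eq_zero hL₁ hL₂ hP₁ hP₂ hle (neg_nonneg.2 hneg) ?_
  rw [hz, Complex.ofReal_neg, hreal, neg_smul, add_neg_cancel]

lemma roots_charpoly_inv_mul_pos {n : ℕ} {L₁ P₁ L₂ P₂ : Matrix (Fin n) (Fin n) ℂ}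
    (hL₁ : L₁.PosDef) (hL₂ : L₂.PosDef) (hP₁ : P₁.IsSymm) (hP₂ : P₂.IsSymm)
    (hle : ∀ x, weight L₁ P₁ x ≤ weight L₂ P₂ x) {z : ℂ}
    (hz : z ∈ ((Amat L₂ P₂)⁻¹ * Amat L₁ P₁).charpoly.roots) :
    ((z.re : ℝ) : ℂ) = z ∧ 0 < z.re := by
  have hroot := Polynomial.isRoot_of_mem_roots hz
  rw [Polynomial.IsRoot.def, eval_charpoly] at hroot
  obtain ⟨v, hv, hvz⟩ := exists_mulVec_eq_zero_iff.2 hroot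
  refine eigenvalue_pos hL₁ hL₂ hP₁ hP₂ hle hv ?_
  rw [sub_mulVec, sub_eq_zero, scalar_apply, ← smul_one_eq_diagonal, smul_mulVec, one_mulVec] at hvz
  have hA₂ : Amat L₂ P₂ * (Amat L₂ P₂)⁻¹ = 1 :=
    mul_nonsing_inv _ (isUnit_det_of_right_inverse
      (Amat_mul_conjM ((isUnit_iff_isUnit_det L₂).1 hL₂.isUnit) P₂))
  have h := congrArg (fun w => Amat L₂ P₂ *ᵥ w) hvz
  simp only [mulVec_smul, mulVec_mulVec, ← mul_assoc, hA₂, one_mul] at h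
  set K : Matrix (Fin n ⊕ Fin n) (Fin n ⊕ Fin n) ℂ :=
    fromBlocks 0 (-(Complex.I • 1)) (Complex.I • 1) 0 with hK
  have hKK : K * K = 1 := by
    rw [hK, fromBlocks_multiply, ← fromBlocks_one]
    congr 1 <;> simp [smul_smul]
  rw [Amat_eq_mul_hermMat hL₁.1 hP₁, Amat_eq_mul_hermMat hL₂.1 hP₂] at h
  have h' := congrArg (fun w => K *ᵥ w) h
  simpa only [mulVec_smul, mulVec_mulVec, ← mul_assoc, ← hK, hKK, one_mul] using h'.symm

lemma roots_charpoly_inv_mul_map_conj {n : ℕ} {L₁ L₂ : Matrix (Fin n) (Fin n) ℂ}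
    (hL₁ : IsUnit L₁.det) (hL₂ : IsUnit L₂.det) (P₁ P₂ : Matrix (Fin n) (Fin n) ℂ) :
    ((Amat L₂ P₂)⁻¹ * Amat L₁ P₁).charpoly.roots.map (starRingEnd ℂ) =
      ((Amat L₂ P₂)⁻¹ * Amat L₁ P₁).charpoly.roots.map (·⁻¹) := by
  have h₁ := Amat_mul_conjM hL₁ P₁
  have h₂ := Amat_mul_conjM hL₂ P₂
  have hU₁ := isUnit_det_of_right_inverse h₁
  have hU₂ := isUnit_det_of_right_inverse h₂
  have hunit : IsUnit ((Amat L₂ P₂)⁻¹ * Amat L₁ P₁) := by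
    rw [isUnit_iff_isUnit_det, det_mul]
    exact (isUnit_nonsing_inv_det _ hU₂).mul hU₁
  rw [← charpoly_inv_roots _ hunit, ← (IsAlgClosed.splits _).roots_map, ← charpoly_map,
    Matrix.mul_inv_rev, nonsing_inv_nonsing_inv _ hU₂, charpoly_mul_comm]
  have hconj : ((Amat L₂ P₂)⁻¹ * Amat L₁ P₁).map (starRingEnd ℂ) =
      Amat L₂ P₂ * (Amat L₁ P₁)⁻¹ := by
    rw [inv_eq_right_inv h₁, inv_eq_right_inv h₂]
    change conjM _ = _
    rw [conjM_mul, conjM_conjM]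
  rw [hconj]

/-- the eigenvalues of 𝐀_{Φ₂}⁻¹𝐀_{Φ₁} come in pairs μ_j, μ_j⁻¹ with μ_j ∈ (0,1]. -/
theorem eigenvalues_pairing (n : ℕ) (L₁ P₁ L₂ P₂ : Matrix (Fin n) (Fin n) ℂ)
    (hL₁ : L₁.PosDef) (hL₂ : L₂.PosDef) (hP₁ : P₁.IsSymm) (hP₂ : P₂.IsSymm)
    (hle : ∀ x, weight L₁ P₁ x ≤ weight L₂ P₂ x) :
    ∃ μ : Fin n → ℝ, (∀ j, μ j ∈ Set.Ioc (0 : ℝ) 1) ∧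
      ((Amat L₂ P₂)⁻¹ * Amat L₁ P₁).charpoly.roots =
        Finset.univ.val.map (fun j => (μ j : ℂ)) +
          Finset.univ.val.map (fun j => ((μ j : ℂ))⁻¹) := by
  have hd₁ := (isUnit_iff_isUnit_det L₁).1 hL₁.isUnit
  have hd₂ := (isUnit_iff_isUnit_det L₂).1 hL₂.isUnit
  have hpos := fun z => roots_charpoly_inv_mul_pos hL₁ hL₂ hP₁ hP₂ hle (z := z)
  have hconj := roots_charpoly_inv_mul_map_conj hd₁ hd₂ P₁ P₂
  have hcard : ((Amat L₂ P₂)⁻¹ * Amat L₁ P₁).charpoly.roots.card = n + n := by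
    rw [← (IsAlgClosed.splits _).natDegree_eq_card_roots, charpoly_natDegree_eq_dim]
    simp
  generalize ((Amat L₂ P₂)⁻¹ * Amat L₁ P₁).charpoly.roots = m at *
  have hre : (m.map Complex.re).map Complex.ofReal = m := by
    rw [Multiset.map_map]
    exact (Multiset.map_congr rfl fun z hz => (hpos z hz).1).trans (Multiset.map_id m)
  have hinv : (m.map Complex.re).map (·⁻¹) = m.map Complex.re := by
    have h := congrArg (Multiset.map Complex.re) hconj
    rw [Multiset.map_map, Multiset.map_map] at h
    rw [Multiset.map_map]
    refine Eq.trans (Multiset.map_congr rfl fun z hz => ?_) (h.symm.trans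
      (Multiset.map_congr rfl fun z _ => Complex.conj_re z))
    change z.re⁻¹ = (z⁻¹).re
    rw [← (hpos z hz).1, ← Complex.ofReal_inv, Complex.ofReal_re, Complex.ofReal_re]
  obtain ⟨μ, hμ, hm⟩ := exists_pairing_of_map_inv_eq n (m.map Complex.re)
    (by
      intro x hx
      obtain ⟨z, hz, rfl⟩ := Multiset.mem_map.1 hx
      exact (hpos z hz).2) hinv (by rw [Multiset.card_map, hcard])
  refine ⟨μ, hμ, ?_⟩
  rw [← hre, hm, Multiset.map_add, Multiset.map_map, Multiset.map_map]
  simp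

end
end

section
/- Let Φ₁, Φ₂ : ℂⁿ → ℝ be real-quadratic weights with positive definite Levi matrices, and assume Φ₁(x) < Φ₂(x) for all x ∈ ℂⁿ \ {0}. Set M = 𝐀_{Φ₂}⁻¹𝐀_{Φ₁}. Then there exists an n×n complex symmetric matrix T such that {(x, Tx) : x ∈ ℂⁿ} = ⊕_{μ ∈ Spec(M), μ ∈ (0,1)} ker(M − μ); that is, the sum of the eigenspaces of M for eigenvalues lying in the real interval (0,1) is the graph of T. -/
open MeasureTheory Real Matrix
open scoped ENNReal ComplexOrder

noncomputable section

namespace Matrix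

variable {ι : Type*} [Fintype ι]

lemma mulVec_eq_sum_smul_col (Q : Matrix ι ι ℂ) (c : ι → ℂ) : Q *ᵥ c = ∑ i, c i • Q.col i := by
  ext j
  simp [mulVec, dotProduct, mul_comm]

variable [DecidableEq ι]

lemma IsHermitian.exists_unitary_diagonal {H : Matrix ι ι ℂ} (hH : H.IsHermitian) :
    ∃ U : Matrix ι ι ℂ, Uᴴ * U = 1 ∧ Uᴴ * H * U = diagonal fun i => (hH.eigenvalues i : ℂ) := by
  refine ⟨hH.eigenvectorUnitary, Unitary.coe_star_mul_self _, ?_⟩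
  have h := hH.conjStarAlgAut_star_eigenvectorUnitary
  rw [Unitary.conjStarAlgAut_star_apply] at h
  exact h

/-- A positive definite form and a Hermitian form can be diagonalized simultaneously. -/
lemma PosDef.exists_simultaneous_diagonalization {D H : Matrix ι ι ℂ} (hD : D.PosDef)
    (hH : H.IsHermitian) :
    ∃ (Q : Matrix ι ι ℂ) (d : ι → ℝ), Qᴴ * D * Q = 1 ∧
      Qᴴ * H * Q = diagonal fun i => (d i : ℂ) := by
  obtain ⟨U, -, hU⟩ := hD.1.exists_unitary_diagonal
  set S : Matrix ι ι ℂ := diagonal fun i => (((√(hD.1.eigenvalues i))⁻¹ : ℝ) : ℂ) with hS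
  have hSH : Sᴴ = S := by
    rw [hS, diagonal_conjTranspose]
    congr 1
    ext i
    simp
  have hUS : (U * S)ᴴ * D * (U * S) = 1 := by
    calc (U * S)ᴴ * D * (U * S) = S * (Uᴴ * D * U) * S := by
          rw [conjTranspose_mul, hSH]; simp only [Matrix.mul_assoc]
      _ = 1 := by
          rw [hU, hS, diagonal_mul_diagonal, diagonal_mul_diagonal, ← diagonal_one]
          congr 1
          ext i
          have hpos := hD.eigenvalues_pos i
          have hne := (Real.sqrt_pos.mpr hpos).ne'
          have hsq := Real.mul_self_sqrt hpos.le
          norm_cast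
          field_simp
          rw [sq, hsq]
  have hH' : ((U * S)ᴴ * H * (U * S)).IsHermitian := isHermitian_conjTranspose_mul_mul _ hH
  obtain ⟨V, hV, hVd⟩ := hH'.exists_unitary_diagonal
  refine ⟨U * S * V, hH'.eigenvalues, ?_, ?_⟩
  · calc (U * S * V)ᴴ * D * (U * S * V) = Vᴴ * ((U * S)ᴴ * D * (U * S)) * V := by
          rw [conjTranspose_mul (U * S)]; simp only [Matrix.mul_assoc]
      _ = 1 := by rw [hUS, Matrix.mul_one, hV]
  · rw [← hVd, conjTranspose_mul (U * S)]
    simp only [Matrix.mul_assoc]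

lemma star_mulVec_dotProduct_of_diagonalization {Q H : Matrix ι ι ℂ} {d : ι → ℝ}
    (hQ : Qᴴ * H * Q = diagonal fun i => (d i : ℂ)) (c : ι → ℂ) :
    (star (Q *ᵥ c) ⬝ᵥ H *ᵥ (Q *ᵥ c)).re = ∑ i, d i * Complex.normSq (c i) := by
  have h : star (Q *ᵥ c) ⬝ᵥ H *ᵥ (Q *ᵥ c) = star c ⬝ᵥ (Qᴴ * H * Q) *ᵥ c := by
    rw [star_mulVec, ← dotProduct_mulVec, mulVec_mulVec, mulVec_mulVec]
  rw [h, hQ, dotProduct, Complex.re_sum]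
  refine Finset.sum_congr rfl fun i _ => ?_
  simp [mulVec_diagonal, Complex.normSq_apply]
  ring

/-- A linear map whose kernel is nonnegative for a Hermitian form is injective on the span of the
negative directions of that form. -/
lemma linearIndependent_of_nonneg_on_ker {V : Type*} [AddCommGroup V] [Module ℂ V]
    {Q H : Matrix ι ι ℂ} {d : ι → ℝ} (hQ : Qᴴ * H * Q = diagonal fun i => (d i : ℂ))
    (f : (ι → ℂ) →ₗ[ℂ] V) (hf : ∀ v, f v = 0 → 0 ≤ (star v ⬝ᵥ H *ᵥ v).re) :
    LinearIndependent ℂ fun i : {i // d i < 0} => f (Q.col i) := by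
  rw [Fintype.linearIndependent_iff]
  intro g hg
  set c : ι → ℂ := fun i => if h : d i < 0 then g ⟨i, h⟩ else 0 with hc
  have hcQ : Q *ᵥ c = ∑ i : {i // d i < 0}, g i • Q.col i := by
    rw [mulVec_eq_sum_smul_col, ← Finset.sum_subset (Finset.subset_univ (Finset.univ.filter fun i => d i < 0))
      (fun i _ hi => by simp_all),
      Finset.sum_subtype (p := fun i => d i < 0) _ (by simp)]
    refine Finset.sum_congr rfl fun i _ => ?_
    simp [hc, i.2]
  have hnn : 0 ≤ ∑ i, d i * Complex.normSq (c i) := by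
    rw [← star_mulVec_dotProduct_of_diagonalization hQ]
    apply hf
    rw [hcQ, map_sum]
    simpa using hg
  have hle : ∀ i ∈ Finset.univ, d i * Complex.normSq (c i) ≤ 0 := by
    intro i _
    by_cases h : d i < 0
    · exact mul_nonpos_of_nonpos_of_nonneg h.le (Complex.normSq_nonneg _)
    · simp [hc, h]
  have hz := (Finset.sum_eq_zero_iff_of_nonpos hle).mp (le_antisymm (Finset.sum_nonpos hle) hnn)
  rintro ⟨i, hi⟩
  have := hz i (Finset.mem_univ i)
  simpa [hc, hi, hi.ne] using this

end Matrix

section Levi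

variable {n : ℕ}

lemma conjM_eq_transpose_s4 {m : Type*} {M : Matrix m m ℂ} (hM : M.IsHermitian) : conjM M = Mᵀ := by
  ext i j
  exact hM.apply j i

lemma conjM_eq_conjTranspose {m : Type*} {M : Matrix m m ℂ} (hM : M.IsSymm) : conjM M = Mᴴ := by
  ext i j
  simp [conjM, hM.apply]

lemma Amat_eq {L P : Matrix (Fin n) (Fin n) ℂ} (hL : L.PosDef) (hP : P.IsSymm) :
    Amat L P = fromBlocks (-(L⁻¹ᵀ * P)) (Complex.I • L⁻¹ᵀ)
      (Complex.I • (L - Pᴴ * L⁻¹ᵀ * P)) (-(Pᴴ * L⁻¹ᵀ)) := by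
  have h : conjM (P * L⁻¹) = conjM P * conjM L⁻¹ := Matrix.map_mul
  rw [Amat, h, conjM_eq_transpose_s4 hL.inv.1, conjM_eq_conjTranspose hP]

/-- The matrix of `-i` times the complex symplectic form. -/
def sympMat (n : ℕ) : Matrix (Fin n ⊕ Fin n) (Fin n ⊕ Fin n) ℂ :=
  fromBlocks 0 (Complex.I • 1) (-Complex.I • 1) 0

lemma sympMat_mul_self : sympMat n * sympMat n = 1 := by
  simp [sympMat, fromBlocks_multiply, smul_smul]

lemma dotProduct_sympMat_mulVec (x ξ y η : Fin n → ℂ) :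
    Sum.elim x ξ ⬝ᵥ sympMat n *ᵥ Sum.elim y η = Complex.I * (x ⬝ᵥ η - ξ ⬝ᵥ y) := by
  simp [sympMat, fromBlocks_mulVec, sumElim_dotProduct_sumElim, smul_mulVec, neg_mulVec]
  ring

lemma Amat_transpose_mul_sympMat_mul_Amat {L P : Matrix (Fin n) (Fin n) ℂ} (hL : L.PosDef)
    (hP : P.IsSymm) : (Amat L P)ᵀ * (sympMat n * Amat L P) = sympMat n := by
  have hdet : IsUnit L.det := (isUnit_iff_isUnit_det _).mp hL.isUnit
  have h₁ : L⁻¹ * L = 1 := nonsing_inv_mul _ hdet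
  have h₂ : Lᵀ * L⁻¹ᵀ = 1 := by rw [← transpose_mul, h₁, transpose_one]
  have h₃ : Lᵀ * (L⁻¹ᵀ * P) = P := by rw [← Matrix.mul_assoc, h₂, Matrix.one_mul]
  have hPH : Pᴴᵀ = Pᴴ := by rw [conjTranspose, hP.eq, ← transpose_map, hP.eq]
  rw [Amat_eq hL hP, sympMat, fromBlocks_transpose, fromBlocks_multiply, fromBlocks_multiply]
  simp only [transpose_neg, transpose_mul, transpose_smul, transpose_sub, transpose_transpose,
    hP.eq, hPH]
  simp only [Matrix.mul_assoc, Matrix.sub_mul, Matrix.mul_sub, h₁, h₂, Matrix.smul_mul,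
    Matrix.mul_smul, smul_smul, smul_sub, neg_neg,
    Matrix.one_mul, Matrix.mul_one, Matrix.zero_mul, zero_add, add_zero, neg_smul, neg_mul,
    mul_neg, Complex.I_mul_I, one_smul, neg_zero, smul_zero, sub_zero, h₃]
  congr 1 <;> module

lemma isUnit_Amat {L P : Matrix (Fin n) (Fin n) ℂ} (hL : L.PosDef) (hP : P.IsSymm) :
    IsUnit (Amat L P) := by
  apply IsUnit.of_mul_eq_one_right (sympMat n * (Amat L P)ᵀ * sympMat n)
  rw [Matrix.mul_assoc, Matrix.mul_assoc, Amat_transpose_mul_sympMat_mul_Amat hL hP,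
    sympMat_mul_self]

/-- The Hermitian form attached to a quadratic weight, in the coordinates `(x, iξ - Px)`. -/
lemma sympMat_mul_Amat {L P : Matrix (Fin n) (Fin n) ℂ} (hL : L.PosDef) (hP : P.IsSymm) :
    sympMat n * Amat L P = (fromBlocks 1 0 (-P) (Complex.I • 1))ᴴ * fromBlocks (-L) 0 0 L⁻¹ᵀ *
      fromBlocks 1 0 (-P) (Complex.I • 1) := by
  rw [Amat_eq hL hP, sympMat, fromBlocks_conjTranspose, fromBlocks_multiply, fromBlocks_multiply,
    fromBlocks_multiply]
  simp only [conjTranspose_one, conjTranspose_zero, conjTranspose_neg, conjTranspose_smul,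
    Complex.star_def, Complex.conj_I]
  simp only [Matrix.mul_assoc, Matrix.mul_sub, Matrix.smul_mul,
    Matrix.mul_smul, smul_smul, smul_sub, neg_neg,
    Matrix.one_mul, Matrix.mul_one, Matrix.zero_mul, Matrix.mul_zero, zero_add, neg_smul,
    neg_mul, mul_neg, Complex.I_mul_I, one_smul]
  congr 1 <;> module

lemma isHermitian_sympMat_mul_Amat {L P : Matrix (Fin n) (Fin n) ℂ} (hL : L.PosDef)
    (hP : P.IsSymm) : (sympMat n * Amat L P).IsHermitian := by
  rw [sympMat_mul_Amat hL hP]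
  apply isHermitian_conjTranspose_mul_mul
  exact IsHermitian.fromBlocks hL.1.neg (by simp) hL.inv.transpose.1

lemma star_dotProduct_sympMat_mul_Amat_mulVec {L P : Matrix (Fin n) (Fin n) ℂ} (hL : L.PosDef)
    (hP : P.IsSymm) (x ξ : Fin n → ℂ) :
    star (Sum.elim x ξ) ⬝ᵥ (sympMat n * Amat L P) *ᵥ Sum.elim x ξ =
      star (Complex.I • ξ - P *ᵥ x) ⬝ᵥ L⁻¹ᵀ *ᵥ (Complex.I • ξ - P *ᵥ x) - star x ⬝ᵥ L *ᵥ x := by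
  have hG : fromBlocks 1 0 (-P) (Complex.I • 1) *ᵥ Sum.elim x ξ =
      Sum.elim x (Complex.I • ξ - P *ᵥ x) := by
    simp [fromBlocks_mulVec, neg_mulVec, smul_mulVec, neg_add_eq_sub]
  rw [sympMat_mul_Amat hL hP, ← mulVec_mulVec, ← mulVec_mulVec, dotProduct_mulVec, ← star_mulVec,
    hG]
  have hstar : star (Sum.elim x (Complex.I • ξ - P *ᵥ x)) =
      Sum.elim (star x) (star (Complex.I • ξ - P *ᵥ x)) := by
    ext (i | i) <;> rfl
  rw [hstar, fromBlocks_mulVec]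
  simp [sumElim_dotProduct_sumElim, neg_mulVec, neg_add_eq_sub]

lemma star_dotProduct_transpose_mulVec_sub {L : Matrix (Fin n) (Fin n) ℂ} (hL : L.PosDef)
    (η y : Fin n → ℂ) :
    (star (star y - L⁻¹ᵀ *ᵥ η) ⬝ᵥ Lᵀ *ᵥ (star y - L⁻¹ᵀ *ᵥ η)).re =
      (star η ⬝ᵥ L⁻¹ᵀ *ᵥ η).re - (2 * (η ⬝ᵥ y).re - (star y ⬝ᵥ L *ᵥ y).re) := by
  have hdet : IsUnit L.det := (isUnit_iff_isUnit_det _).mp hL.isUnit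
  have h₁ : Lᵀ * L⁻¹ᵀ = 1 := by rw [← transpose_mul, nonsing_inv_mul _ hdet, transpose_one]
  have h₂ : star (L⁻¹ᵀ *ᵥ η) = star η ᵥ* L⁻¹ᵀ := by
    rw [star_mulVec, hL.inv.transpose.1.eq]
  have h₃ : L⁻¹ᵀ * Lᵀ = 1 := by rw [← transpose_mul, mul_nonsing_inv _ hdet, transpose_one]
  have h₄ : y ⬝ᵥ Lᵀ *ᵥ star y = star y ⬝ᵥ L *ᵥ y := by
    rw [mulVec_transpose, dotProduct_comm, ← dotProduct_mulVec]
  rw [mulVec_sub, mulVec_mulVec, h₁, one_mulVec, star_sub, star_star, sub_dotProduct,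
    dotProduct_sub, dotProduct_sub, h₄, h₂, ← dotProduct_mulVec, mulVec_mulVec, h₃, one_mulVec,
    ← dotProduct_mulVec, dotProduct_comm y η, star_dotProduct_star, dotProduct_comm y η]
  simp
  ring

lemma weight_add_weight_I_smul_sub (L : Matrix (Fin n) (Fin n) ℂ) {P : Matrix (Fin n) (Fin n) ℂ}
    (hP : P.IsSymm) (x y : Fin n → ℂ) :
    weight L P (x + y) + weight L P (Complex.I • (x - y)) =
      (star x ⬝ᵥ L *ᵥ x).re + (star y ⬝ᵥ L *ᵥ y).re + 2 * (P *ᵥ x ⬝ᵥ y).re := by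
  have hsymm : P *ᵥ y ⬝ᵥ x = P *ᵥ x ⬝ᵥ y := by
    rw [dotProduct_comm, dotProduct_mulVec, ← mulVec_transpose, hP.eq]
  have hw : ∀ z, weight L P z = 1 / 2 * ((L *ᵥ z ⬝ᵥ star z).re + (P *ᵥ z ⬝ᵥ z).re) := fun _ => rfl
  simp only [hw, mulVec_add, mulVec_smul, mulVec_sub, star_add, star_smul, star_sub,
    add_dotProduct, dotProduct_add, sub_dotProduct, dotProduct_sub, smul_dotProduct,
    dotProduct_smul, hsymm, dotProduct_comm (star x) (L *ᵥ x), dotProduct_comm (star y) (L *ᵥ y)]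
  simp
  ring

/-- A pointwise strict inequality of weights reverses the attached Hermitian forms. -/
lemma posDef_sympMat_mul_Amat_sub {L₁ P₁ L₂ P₂ : Matrix (Fin n) (Fin n) ℂ}
    (hL₁ : L₁.PosDef) (hL₂ : L₂.PosDef) (hP₁ : P₁.IsSymm) (hP₂ : P₂.IsSymm)
    (hlt : ∀ x : Fin n → ℂ, x ≠ 0 → weight L₁ P₁ x < weight L₂ P₂ x) :
    (sympMat n * Amat L₁ P₁ - sympMat n * Amat L₂ P₂).PosDef := by
  have hH := (isHermitian_sympMat_mul_Amat hL₁ hP₁).sub (isHermitian_sympMat_mul_Amat hL₂ hP₂)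
  refine .of_dotProduct_mulVec_pos hH fun v hv => ?_
  rw [Complex.pos_iff]
  refine ⟨?_, (hH.im_star_dotProduct_mulVec_self v).symm⟩
  obtain ⟨x, ξ, rfl⟩ : ∃ x ξ, v = Sum.elim x ξ := ⟨_, _, (Sum.elim_comp_inl_inr v).symm⟩
  rw [sub_mulVec, dotProduct_sub, star_dotProduct_sympMat_mul_Amat_mulVec hL₁ hP₁,
    star_dotProduct_sympMat_mul_Amat_mulVec hL₂ hP₂]
  set η₂ := Complex.I • ξ - P₂ *ᵥ x with hη₂
  set y := star (L₂⁻¹ᵀ *ᵥ η₂) with hy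
  have h₁ := star_dotProduct_transpose_mulVec_sub hL₁ (Complex.I • ξ - P₁ *ᵥ x) y
  have h₁' := hL₁.transpose.posSemidef.re_dotProduct_nonneg
    (star y - L₁⁻¹ᵀ *ᵥ (Complex.I • ξ - P₁ *ᵥ x))
  have h₂ := star_dotProduct_transpose_mulVec_sub hL₂ η₂ y
  have h₂' : star y - L₂⁻¹ᵀ *ᵥ η₂ = 0 := by rw [hy, star_star, sub_self]
  rw [h₂', mulVec_zero, dotProduct_zero, Complex.zero_re] at h₂
  have hw₁ := weight_add_weight_I_smul_sub L₁ hP₁ x y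
  have hw₂ := weight_add_weight_I_smul_sub L₂ hP₂ x y
  have hle : ∀ z, weight L₁ P₁ z ≤ weight L₂ P₂ z := by
    intro z
    rcases eq_or_ne z 0 with rfl | hz
    · simp [weight, dotC]
    · exact (hlt z hz).le
  have hsum : weight L₁ P₁ (x + y) + weight L₁ P₁ (Complex.I • (x - y)) <
      weight L₂ P₂ (x + y) + weight L₂ P₂ (Complex.I • (x - y)) := by
    by_cases hadd : x + y = 0
    · have hsub : Complex.I • (x - y) ≠ 0 := by
        intro hsub
        have hxy : x = y := sub_eq_zero.mp ((smul_eq_zero.mp hsub).resolve_left Complex.I_ne_zero)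
        have hx : x = 0 := by
          rw [← hxy] at hadd
          exact self_eq_neg.mp (eq_neg_of_add_eq_zero_left hadd)
        have hN : L₂⁻¹ᵀ *ᵥ η₂ = 0 := star_eq_zero.mp (hy.symm.trans (hxy.symm.trans hx))
        have hη : η₂ = 0 := by
          have hinj := mulVec_injective_of_isUnit hL₂.inv.transpose.isUnit
          exact hinj (by rw [hN, mulVec_zero])
        have hξ : ξ = 0 := by
          rw [hη₂, hx, mulVec_zero, sub_zero] at hη
          exact (smul_eq_zero.mp hη).resolve_left Complex.I_ne_zero
        apply hv
        rw [hx, hξ]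
        ext (i | i) <;> rfl
      exact add_lt_add_of_le_of_lt (hle _) (hlt _ hsub)
    · exact add_lt_add_of_lt_of_le (hlt _ hadd) (hle _)
  rw [hη₂] at h₂ ⊢
  simp only [sub_dotProduct, Complex.sub_re] at h₁ h₂ ⊢
  simp only [RCLike.re_to_complex] at h₁'
  linarith

end Levi

lemma dotProduct_sympMat_mulVec_eq_zero {n : ℕ} {L₁ P₁ L₂ P₂ : Matrix (Fin n) (Fin n) ℂ}
    (hL₁ : L₁.PosDef) (hL₂ : L₂.PosDef) (hP₁ : P₁.IsSymm) (hP₂ : P₂.IsSymm) {μ ν : ℂ}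
    (hμν : μ * ν ≠ 1) {v w : Fin n ⊕ Fin n → ℂ}
    (hv : Amat L₁ P₁ *ᵥ v = μ • Amat L₂ P₂ *ᵥ v) (hw : Amat L₁ P₁ *ᵥ w = ν • Amat L₂ P₂ *ᵥ w) :
    v ⬝ᵥ sympMat n *ᵥ w = 0 := by
  have key : ∀ {L P : Matrix (Fin n) (Fin n) ℂ}, L.PosDef → P.IsSymm →
      v ⬝ᵥ sympMat n *ᵥ w = (Amat L P *ᵥ v) ⬝ᵥ sympMat n *ᵥ (Amat L P *ᵥ w) := by
    intro L P hL hP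
    conv_lhs => rw [← Amat_transpose_mul_sympMat_mul_Amat hL hP]
    rw [← mulVec_mulVec, ← mulVec_mulVec, dotProduct_mulVec, vecMul_transpose]
  have h := key hL₁ hP₁
  rw [hv, hw, mulVec_smul, smul_dotProduct, dotProduct_smul, ← key hL₂ hP₂, smul_smul,
    smul_eq_mul] at h
  have h' : (μ * ν - 1) * (v ⬝ᵥ sympMat n *ᵥ w) = 0 := by rw [sub_mul, ← h]; ring
  exact (mul_eq_zero.mp h').resolve_left (sub_ne_zero.mpr hμν)

/-- A subspace spanned by `n` pairwise symplectically orthogonal vectors whose first components are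
linearly independent is the graph of a symmetric matrix. -/
lemma exists_isSymm_range_eq_span {n : ℕ} {κ : Type*} [Fintype κ] (q : κ → Fin n ⊕ Fin n → ℂ)
    (hcard : Fintype.card κ = n) (hq : LinearIndependent ℂ fun k => q k ∘ Sum.inl)
    (horth : ∀ k l, q k ⬝ᵥ sympMat n *ᵥ q l = 0) :
    ∃ T : Matrix (Fin n) (Fin n) ℂ, T.IsSymm ∧
      (Set.range fun x : Fin n → ℂ => Sum.elim x (T *ᵥ x)) =
        (Submodule.span ℂ (Set.range q) : Set (Fin n ⊕ Fin n → ℂ)) := by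
  obtain ⟨b, hb⟩ : ∃ b : Module.Basis κ ℂ (Fin n → ℂ), ⇑b = fun k => q k ∘ Sum.inl := by
    rcases isEmpty_or_nonempty κ with hκ | hκ
    · have hn : n = 0 := by rw [← hcard, Fintype.card_eq_zero]
      subst hn
      exact ⟨Module.Basis.empty _, funext fun k => isEmptyElim k⟩
    · exact ⟨basisOfLinearIndependentOfCardEqFinrank hq (by simp [hcard]), by simp⟩
  set τ : (Fin n → ℂ) →ₗ[ℂ] (Fin n → ℂ) := b.constr ℂ fun k => q k ∘ Sum.inr with hτ
  have hτb : ∀ k, LinearMap.toMatrix' τ *ᵥ b k = q k ∘ Sum.inr := by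
    intro k
    rw [LinearMap.toMatrix'_mulVec, hτ, b.constr_basis]
  have hgb : ∀ k, Sum.elim (b k) (LinearMap.toMatrix' τ *ᵥ b k) = q k := by
    intro k
    rw [hτb, hb]
    exact Sum.elim_comp_inl_inr _
  refine ⟨LinearMap.toMatrix' τ, ?_, ?_⟩
  · set T := LinearMap.toMatrix' τ
    have hform : ∀ k l, b k ⬝ᵥ T *ᵥ b l = b k ⬝ᵥ Tᵀ *ᵥ b l := by
      intro k l
      have h := horth k l
      rw [← hgb, ← hgb, dotProduct_sympMat_mulVec, mul_eq_zero, or_iff_right Complex.I_ne_zero,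
        sub_eq_zero] at h
      rw [h, mulVec_transpose, dotProduct_comm (b k), ← dotProduct_mulVec, dotProduct_comm]
    have hbil : Matrix.toBilin' T = Matrix.toBilin' Tᵀ := by
      refine LinearMap.BilinForm.ext_basis b fun k l => ?_
      simpa [Matrix.toBilin'_apply'] using hform k l
    exact (Matrix.toBilin'.injective hbil).symm
  · let g : (Fin n → ℂ) →ₗ[ℂ] (Fin n ⊕ Fin n → ℂ) :=
      { toFun := fun x => Sum.elim x (LinearMap.toMatrix' τ *ᵥ x)
        map_add' := fun x y => by ext (i | i) <;> simp
        map_smul' := fun c x => by ext (i | i) <;> simp }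
    have hg : LinearMap.range g = Submodule.span ℂ (Set.range q) := by
      rw [LinearMap.range_eq_map, ← b.span_eq, Submodule.map_span, ← Set.range_comp]
      exact congrArg _ (congrArg _ (funext hgb))
    rw [← hg]
    rfl

/-- the stable subspace of 𝐀_{Φ₂}⁻¹𝐀_{Φ₁} is the graph of a symmetric matrix T. -/
theorem stable_subspace_is_graph (n : ℕ) (L₁ P₁ L₂ P₂ : Matrix (Fin n) (Fin n) ℂ)
    (hL₁ : L₁.PosDef) (hL₂ : L₂.PosDef) (hP₁ : P₁.IsSymm) (hP₂ : P₂.IsSymm)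
    (hlt : ∀ x : Fin n → ℂ, x ≠ 0 → weight L₁ P₁ x < weight L₂ P₂ x) :
    ∃ T : Matrix (Fin n) (Fin n) ℂ, T.IsSymm ∧
      (Set.range fun x : Fin n → ℂ => Sum.elim x (T.mulVec x)) =
        ↑(⨆ μ ∈ Set.Ioo (0 : ℝ) 1,
          Module.End.eigenspace
            (Matrix.toLin' ((Amat L₂ P₂)⁻¹ * Amat L₁ P₁)) (μ : ℂ)) := by
  set M := (Amat L₂ P₂)⁻¹ * Amat L₁ P₁
  set H₁ := sympMat n * Amat L₁ P₁ with hH₁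
  set H₂ := sympMat n * Amat L₂ P₂ with hH₂
  have hA₁ := isUnit_Amat hL₁ hP₁
  have hA₂ := isUnit_Amat hL₂ hP₂
  have hAM : Amat L₂ P₂ * M = Amat L₁ P₁ :=
    mul_nonsing_inv_cancel_left _ _ ((isUnit_iff_isUnit_det _).mp hA₂)
  have hHM : H₂ * M = H₁ := by rw [hH₂, Matrix.mul_assoc, hAM]
  obtain ⟨Q, d, hQD, hQH₂⟩ :=
    (posDef_sympMat_mul_Amat_sub hL₁ hL₂ hP₁ hP₂ hlt).exists_simultaneous_diagonalization
      (isHermitian_sympMat_mul_Amat hL₂ hP₂)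
  rw [← hH₂] at hQH₂
  have hQH₁ : Qᴴ * H₁ * Q = diagonal fun i => ((d i + 1 : ℝ) : ℂ) := by
    have h : Qᴴ * H₁ * Q = Qᴴ * H₂ * Q + Qᴴ * (H₁ - H₂) * Q := by noncomm_ring
    rw [h, hQH₂, hQD, ← diagonal_one, diagonal_add]
    simp
  have hQH₁' : Qᴴ * (-H₁) * Q = diagonal fun i => ((-(d i + 1) : ℝ) : ℂ) := by
    rw [Matrix.mul_neg, Matrix.neg_mul, hQH₁, diagonal_neg]
    simp
  have hQ : IsUnit Q := IsUnit.of_mul_eq_one_right _ hQD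
  have hQH : IsUnit Qᴴ := hQ.star
  have hQHinj : Function.Injective (Qᴴ *ᵥ ·) := mulVec_injective_of_isUnit hQH
  have hK : IsUnit (sympMat n) := IsUnit.of_mul_eq_one_right _ sympMat_mul_self
  have hd₁ : ∀ i, d i + 1 ≠ 0 := by
    intro i hi
    have hu : IsUnit (Qᴴ * H₁ * Q) := (hQH.mul (hK.mul hA₁)).mul hQ
    rw [hQH₁, isUnit_diagonal, Pi.isUnit_iff] at hu
    exact (hu i).ne_zero (by simp [hi])
  -- The two index sets below cover all indices and have at most `n` elements each.
  have hind := linearIndependent_of_nonneg_on_ker hQH₂ (LinearMap.funLeft ℂ ℂ Sum.inl) (by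
    intro v hv
    obtain ⟨x, ξ, rfl⟩ : ∃ x ξ, v = Sum.elim x ξ := ⟨_, _, (Sum.elim_comp_inl_inr v).symm⟩
    have hx : x = 0 := hv
    rw [hH₂, star_dotProduct_sympMat_mul_Amat_mulVec hL₂ hP₂, hx, mulVec_zero L₂,
      dotProduct_zero, sub_zero]
    exact hL₂.inv.transpose.posSemidef.re_dotProduct_nonneg _)
  have hind' := linearIndependent_of_nonneg_on_ker hQH₁'
    (Complex.I • LinearMap.funLeft ℂ ℂ Sum.inr - P₁.mulVecLin ∘ₗ LinearMap.funLeft ℂ ℂ Sum.inl) (by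
    intro v hv
    obtain ⟨x, ξ, rfl⟩ : ∃ x ξ, v = Sum.elim x ξ := ⟨_, _, (Sum.elim_comp_inl_inr v).symm⟩
    have hη : Complex.I • ξ - P₁ *ᵥ x = 0 := hv
    rw [neg_mulVec, dotProduct_neg, hH₁, star_dotProduct_sympMat_mul_Amat_mulVec hL₁ hP₁, hη,
      mulVec_zero, dotProduct_zero, zero_sub, neg_neg]
    exact hL₁.posSemidef.re_dotProduct_nonneg _)
  have hcard := hind.fintype_card_le_finrank
  have hcard' := hind'.fintype_card_le_finrank
  rw [Module.finrank_fin_fun, Fintype.card_subtype] at hcard hcard'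
  have hunion : (Finset.univ.filter fun i => d i < 0) ∪
      (Finset.univ.filter fun i => -(d i + 1) < 0) = Finset.univ := by
    ext i
    simp only [Finset.mem_union, Finset.mem_filter, Finset.mem_univ, true_and, iff_true]
    by_contra! h
    linarith [h.1, h.2]
  have hsum := Finset.card_union_add_card_inter (Finset.univ.filter fun i => d i < 0)
    (Finset.univ.filter fun i => -(d i + 1) < 0)
  rw [hunion, Finset.card_univ, Fintype.card_sum, Fintype.card_fin] at hsum
  have hinter : (Finset.univ.filter fun i => d i < 0) ∩
      (Finset.univ.filter fun i => -(d i + 1) < 0) = ∅ := by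
    rw [← Finset.card_eq_zero]
    lia
  have hneg : ∀ i, d i < 0 → d i < -1 := by
    intro i hi
    have hi' : i ∉ (Finset.univ.filter fun i => d i < 0) ∩
      (Finset.univ.filter fun i => -(d i + 1) < 0) := by
      rw [hinter]
      exact Finset.notMem_empty i
    simp only [Finset.mem_inter, Finset.mem_filter, Finset.mem_univ, true_and, not_and, not_lt]
      at hi'
    exact lt_of_le_of_ne (by linarith [hi' hi]) fun h' => hd₁ i (by linarith)
  have hcol : ∀ {N : Matrix (Fin n ⊕ Fin n) (Fin n ⊕ Fin n) ℂ} {e : Fin n ⊕ Fin n → ℝ},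
      Qᴴ * N * Q = diagonal (fun i => (e i : ℂ)) → ∀ i,
      Qᴴ *ᵥ (N *ᵥ Q.col i) = (e i : ℂ) • Pi.single i 1 := by
    intro N e h i
    rw [← mulVec_single_one Q, mulVec_mulVec, mulVec_mulVec, h,
      diagonal_mulVec_single]
    ext j
    simp [Pi.single_apply]
  have heig : ∀ i, d i < 0 → H₁ *ᵥ Q.col i = (((d i + 1) / d i : ℝ) : ℂ) • H₂ *ᵥ Q.col i := by
    intro i hi
    apply hQHinj
    simp only [mulVec_smul]
    rw [hcol hQH₁, hcol hQH₂, smul_smul, ← Complex.ofReal_mul, div_mul_cancel₀ _ hi.ne]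
  have heigA : ∀ i, d i < 0 →
      Amat L₁ P₁ *ᵥ Q.col i = (((d i + 1) / d i : ℝ) : ℂ) • Amat L₂ P₂ *ᵥ Q.col i := by
    intro i hi
    apply mulVec_injective_of_isUnit hK
    simp only [mulVec_smul, mulVec_mulVec]
    exact heig i hi
  have hμ : ∀ i, d i < 0 → (d i + 1) / d i ∈ Set.Ioo (0 : ℝ) 1 := by
    intro i hi
    have hi' := hneg i hi
    exact ⟨div_pos_of_neg_of_neg (by linarith) hi, by rw [div_lt_one_of_neg hi]; linarith⟩
  obtain ⟨T, hT, hrange⟩ := exists_isSymm_range_eq_span (fun k : {i // d i < 0} => Q.col k)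
    (by rw [Fintype.card_subtype]; lia) hind (by
      rintro ⟨k, hk⟩ ⟨l, hl⟩
      refine dotProduct_sympMat_mulVec_eq_zero hL₁ hL₂ hP₁ hP₂ ?_ (heigA k hk) (heigA l hl)
      rw [← Complex.ofReal_mul]
      exact_mod_cast (mul_lt_one_of_nonneg_of_lt_one_left (hμ k hk).1.le (hμ k hk).2
        (hμ l hl).2.le).ne)
  refine ⟨T, hT, hrange.trans (congrArg _ (le_antisymm ?_ ?_))⟩
  · rw [Submodule.span_le]
    rintro _ ⟨⟨i, hi⟩, rfl⟩
    refine Submodule.mem_iSup_of_mem _ (Submodule.mem_iSup_of_mem (hμ i hi) ?_)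
    rw [Module.End.mem_eigenspace_iff, toLin'_apply]
    apply mulVec_injective_of_isUnit hA₂
    simp only [mulVec_smul, mulVec_mulVec, hAM]
    exact heigA i hi
  · refine iSup₂_le fun μ hμ v hv => ?_
    rw [Module.End.mem_eigenspace_iff, toLin'_apply] at hv
    obtain ⟨c, rfl⟩ := mulVec_surjective_iff_isUnit.mpr hQ v
    have hc : ∀ i, 0 ≤ d i → c i = 0 := by
      intro i hi
      have h : H₁ *ᵥ (Q *ᵥ c) = (μ : ℂ) • H₂ *ᵥ (Q *ᵥ c) := by
        rw [← hHM, ← mulVec_mulVec, hv, mulVec_smul]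
      have h' := congrFun (congrArg (Qᴴ *ᵥ ·) h) i
      simp only [mulVec_smul, mulVec_mulVec, ← Matrix.mul_assoc, hQH₁, hQH₂, mulVec_diagonal,
        Pi.smul_apply, smul_eq_mul] at h'
      have h'' : ((d i + 1 - μ * d i : ℝ) : ℂ) * c i = 0 := by
        push_cast at h' ⊢
        linear_combination h'
      refine (mul_eq_zero.mp h'').resolve_left ?_
      have : 0 < d i + 1 - μ * d i := by nlinarith [hμ.2]
      exact_mod_cast this.ne'
    rw [mulVec_eq_sum_smul_col]
    refine Submodule.sum_mem _ fun i _ => ?_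
    rcases lt_or_ge (d i) 0 with hi | hi
    · exact Submodule.smul_mem _ _ (Submodule.subset_span ⟨⟨i, hi⟩, rfl⟩)
    · simp [hc i hi]

end
end
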